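/- Suppose 0 ≤ k ≤ p − 2, e_k ≥ h_k, and h_{k+1} = h_k − 1 (equivalently, c(k + 1 + h_k) < h_k). Then e_{k+1} < h_{k+1} if and only if N_k < 2·h_k² − 4·h_k + c(k+1) + 2 (equivalently, e_k² < h_k² − 4·h_k + c(k+1) + 2). (Proposition 4.9(ii).) -/

import Mathlib

/-- The shifted h-index of order `k`: the largest `m` with `1 ≤ m ≤ p - k` and
`c (k + m) ≥ m` (the Hirsch h-index of the tail sequence `c (k+1), …, c p`).
Taken as the `sup` of the (finite) set of such `m`, which equals its maximum
when the set is nonempty and is `0` otherwise. -/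
def hIdx (p : ℕ) (c : ℕ → ℕ) (k : ℕ) : ℕ :=
  ((Finset.Icc 1 (p - k)).filter (fun m => m ≤ c (k + m))).sup id

/-- The shifted core sum `N_k = Σ_{j=k+1}^{k+h_k} c j`. -/
def coreSum (p : ℕ) (c : ℕ → ℕ) (k : ℕ) : ℕ :=
  ∑ j ∈ Finset.Icc (k + 1) (k + hIdx p c k), c j

/-- The shifted e-index `e_k = √(N_k − h_k²)`. -/
noncomputable def eIdx (p : ℕ) (c : ℕ → ℕ) (k : ℕ) : ℝ :=
  Real.sqrt ((coreSum p c k : ℝ) - (hIdx p c k : ℝ) ^ 2)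

/-!
If `h_k = h_{k+1} + 1`, the cores of orders `k` and `k + 1` end at the same paper
`k + h_k = k + 1 + h_{k+1}`, so they differ only in the paper `k + 1` and
`N_k = c (k + 1) + N_{k+1}`. Squaring turns `e_{k+1} < h_{k+1}` into `N_{k+1} < 2 * h_{k+1} ^ 2`,
and substituting `h_{k+1} = h_k - 1` gives the bound on `N_k`.
-/

section

variable {p : ℕ} {c : ℕ → ℕ} {k : ℕ}

theorem le_hIdx {m : ℕ} (hm : 1 ≤ m) (hmp : k + m ≤ p) (hmc : m ≤ c (k + m)) :
    m ≤ hIdx p c k :=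
  Finset.le_sup (f := id) <| Finset.mem_filter.2 ⟨Finset.mem_Icc.2 ⟨hm, by omega⟩, hmc⟩

theorem hIdx_le_sub : hIdx p c k ≤ p - k :=
  Finset.sup_le fun _ hm => (Finset.mem_Icc.1 (Finset.mem_filter.1 hm).1).2

theorem hIdx_le_apply_add_hIdx : hIdx p c k ≤ c (k + hIdx p c k) :=
  Finset.sup_induction (p := fun m => m ≤ c (k + m)) (Nat.zero_le _)
    (fun _ ha _ hb => max_rec' (fun m => m ≤ c (k + m)) ha hb)
    fun _ hm => (Finset.mem_filter.1 hm).2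

theorem sq_hIdx_le_coreSum (hc : AntitoneOn c (Set.Icc (k + 1) p)) :
    hIdx p c k ^ 2 ≤ coreSum p c k := by
  have hIdx_le_apply : ∀ j ∈ Finset.Icc (k + 1) (k + hIdx p c k), hIdx p c k ≤ c j := by
    intro j hj
    obtain ⟨hkj, hjh⟩ := Finset.mem_Icc.1 hj
    have hhp : hIdx p c k ≤ p - k := hIdx_le_sub
    exact hIdx_le_apply_add_hIdx.trans (hc ⟨hkj, by omega⟩ ⟨by omega, by omega⟩ hjh)
  have card_mul_le := Finset.card_nsmul_le_sum _ c _ hIdx_le_apply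
  rwa [Nat.card_Icc, Nat.add_right_comm, Nat.add_sub_cancel_left, smul_eq_mul, ← sq] at card_mul_le

theorem coreSum_eq_add_coreSum_succ (hh : hIdx p c k = hIdx p c (k + 1) + 1) :
    coreSum p c k = c (k + 1) + coreSum p c (k + 1) := by
  have core_end : k + hIdx p c k = k + 1 + hIdx p c (k + 1) := by omega
  rw [coreSum, coreSum, core_end, ← Finset.add_sum_Ioc_eq_sum_Icc (Nat.le_add_right _ _),
    Finset.Icc_add_one_left_eq_Ioc]

theorem eIdx_lt_hIdx_iff (hN : hIdx p c k ^ 2 ≤ coreSum p c k) :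
    eIdx p c k < hIdx p c k ↔ coreSum p c k < 2 * hIdx p c k ^ 2 := by
  have radicand_nonneg : (0 : ℝ) ≤ coreSum p c k - (hIdx p c k : ℝ) ^ 2 :=
    sub_nonneg.2 (mod_cast hN)
  rw [eIdx, Real.sqrt_lt radicand_nonneg (Nat.cast_nonneg _), sub_lt_iff_lt_add, ← two_mul]
  norm_cast

theorem stmt_11_general (hN : hIdx p c (k + 1) ^ 2 ≤ coreSum p c (k + 1))
    (hh : hIdx p c k = hIdx p c (k + 1) + 1) :
    eIdx p c (k + 1) < (hIdx p c (k + 1) : ℝ) ↔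
      (coreSum p c k : ℤ) <
        2 * (hIdx p c k : ℤ) ^ 2 - 4 * hIdx p c k + c (k + 1) + 2 := by
  have bound_eq : 2 * (hIdx p c k : ℤ) ^ 2 - 4 * hIdx p c k + c (k + 1) + 2 =
      c (k + 1) + 2 * (hIdx p c (k + 1) : ℤ) ^ 2 := by
    rw [hh]
    push_cast
    ring
  rw [eIdx_lt_hIdx_iff hN, bound_eq, coreSum_eq_add_coreSum_succ hh, Nat.cast_add,
    add_lt_add_iff_left]
  norm_cast

end

theorem stmt_11 (p : ℕ) (hp : 1 ≤ p) (c : ℕ → ℕ)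
    (hmono : ∀ i j, 1 ≤ i → i ≤ j → j ≤ p → c j ≤ c i)
    (hpos : ∀ j, 1 ≤ j → j ≤ p → 1 ≤ c j)
    (hzero : ∀ j, p < j → c j = 0)
    (k : ℕ) (hk : k + 2 ≤ p)
    (he : (hIdx p c k : ℝ) ≤ eIdx p c k)
    (hh : hIdx p c (k + 1) = hIdx p c k - 1) :
    eIdx p c (k + 1) < (hIdx p c (k + 1) : ℝ) ↔
      (coreSum p c k : ℤ) <
        2 * (hIdx p c k : ℤ) ^ 2 - 4 * hIdx p c k + c (k + 1) + 2 := by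
  have hIdx_pos : 1 ≤ hIdx p c (k + 1) := le_hIdx le_rfl hk (hpos _ (by omega) hk)
  have antitone_tail : AntitoneOn c (Set.Icc (k + 2) p) := fun i hi j hj hij =>
    hmono i j (le_of_add_le_right hi.1) hij hj.2
  exact stmt_11_general (sq_hIdx_le_coreSum antitone_tail) (by omega)
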